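/- Let (G, G⁺, Δ) be a Garside structure, x ∈ G, and let y, z ∈ R(x) be distinct. Then there exist simple elements u₁, …, u_m ∈ Div(Δ) such that (u₁⋯u_k)⁻¹ y (u₁⋯u_k) ∈ R(x) for every k = 1, …, m, and (u₁⋯u_m)⁻¹ y (u₁⋯u_m) = z. -/

import Mathlib

open scoped Pointwise Classical

/-- A Garside structure on a group `G`: a submonoid `pos` of positive elements with
trivial units, prefix and suffix lattice operations, and a Garside element `delta`. -/
structure GarsideStructure (G : Type*) [Group G] where
  /-- the submonoid of positive elements -/
  pos : Submonoid G
  /-- the Garside element Δ -/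
  delta : G
  /-- meet for the prefix order -/
  meet : G → G → G
  /-- join for the prefix order -/
  join : G → G → G
  /-- meet for the suffix order -/
  rmeet : G → G → G
  /-- join for the suffix order -/
  rjoin : G → G → G
  units_triv : ∀ a : G, a ∈ pos → a⁻¹ ∈ pos → a = 1
  meet_le_left : ∀ a b : G, (meet a b)⁻¹ * a ∈ pos
  meet_le_right : ∀ a b : G, (meet a b)⁻¹ * b ∈ pos
  le_meet : ∀ a b c : G, c⁻¹ * a ∈ pos → c⁻¹ * b ∈ pos → c⁻¹ * meet a b ∈ pos
  le_join_left : ∀ a b : G, a⁻¹ * join a b ∈ pos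
  le_join_right : ∀ a b : G, b⁻¹ * join a b ∈ pos
  join_le : ∀ a b c : G, a⁻¹ * c ∈ pos → b⁻¹ * c ∈ pos → (join a b)⁻¹ * c ∈ pos
  rmeet_le_left : ∀ a b : G, a * (rmeet a b)⁻¹ ∈ pos
  rmeet_le_right : ∀ a b : G, b * (rmeet a b)⁻¹ ∈ pos
  le_rmeet : ∀ a b c : G, a * c⁻¹ ∈ pos → b * c⁻¹ ∈ pos → rmeet a b * c⁻¹ ∈ pos
  rjoin_le_left : ∀ a b : G, rjoin a b * a⁻¹ ∈ pos
  rjoin_le_right : ∀ a b : G, rjoin a b * b⁻¹ ∈ pos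
  rjoin_le : ∀ a b c : G, c * a⁻¹ ∈ pos → c * b⁻¹ ∈ pos → c * (rjoin a b)⁻¹ ∈ pos
  delta_pos : delta ∈ pos
  /-- Δ is balanced: its positive prefixes coincide with its positive suffixes -/
  delta_balanced : ∀ s : G, s ∈ pos → (s⁻¹ * delta ∈ pos ↔ delta * s⁻¹ ∈ pos)
  /-- the set of simple elements (divisors of Δ) is finite -/
  divDelta_finite : {s : G | s ∈ pos ∧ s⁻¹ * delta ∈ pos}.Finite
  /-- the simple elements generate `G` -/
  divDelta_generates : Subgroup.closure {s : G | s ∈ pos ∧ s⁻¹ * delta ∈ pos} = ⊤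
  /-- the atoms generate the positive monoid -/
  atoms_generate :
    Submonoid.closure {a : G | a ∈ pos ∧ a ≠ 1 ∧
      ∀ b ∈ pos, b⁻¹ * a ∈ pos → b = 1 ∨ b = a} = pos
  /-- every atom divides Δ -/
  atoms_divide_delta : ∀ a : G, a ∈ pos → a ≠ 1 →
    (∀ b ∈ pos, b⁻¹ * a ∈ pos → b = 1 ∨ b = a) → a⁻¹ * delta ∈ pos
  /-- every element is bounded below and above by powers of Δ -/
  delta_bounds : ∀ x : G, ∃ p q : ℤ, p ≤ q ∧ (delta ^ p)⁻¹ * x ∈ pos ∧ x⁻¹ * delta ^ q ∈ pos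
  /-- conjugation by Δ maps the positive monoid bijectively onto itself -/
  conj_delta : ∀ a : G, a ∈ pos ↔ delta * a * delta⁻¹ ∈ pos
  /-- some positive power of Δ is central -/
  central_power : ∃ n : ℕ, 0 < n ∧ delta ^ n ∈ Subgroup.center G
  /-- no infinite strictly decreasing (for the prefix order) sequence of positive elements -/
  no_infinite_descent : ¬ ∃ f : ℕ → G, (∀ n, f n ∈ pos) ∧
    ∀ n, (f (n + 1))⁻¹ * f n ∈ pos ∧ f (n + 1) ≠ f n

namespace GarsideStructure

variable {G : Type*} [Group G] (S : GarsideStructure G)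

/-- the prefix order: `a ≼ b` iff `a⁻¹ * b` is positive -/
def le (a b : G) : Prop := a⁻¹ * b ∈ S.pos

/-- the set of positive prefixes of an element -/
def Div (d : G) : Set G := {s : G | s ∈ S.pos ∧ S.le s d}

/-- atoms: nontrivial positive elements with no nontrivial proper positive prefix -/
def IsAtomic (a : G) : Prop :=
  a ∈ S.pos ∧ a ≠ 1 ∧ ∀ b ∈ S.pos, S.le b a → b = 1 ∨ b = a

/-- the set of atoms -/
def atoms : Set G := {a : G | S.IsAtomic a}

/-- the left denominator of `x`: `D_L x = (1 ∧ x)⁻¹` -/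
def DL (x : G) : G := (S.meet 1 x)⁻¹

/-- the left numerator of `x`: `N_L x = D_L x * x` -/
def NL (x : G) : G := S.DL x * x

/-- the (left) swap `φ(x) = N_L x * (D_L x)⁻¹ = D_L x * x * (D_L x)⁻¹` -/
def swap (x : G) : G := S.DL x * x * (S.DL x)⁻¹

/-- an element is recurrent if it is fixed by some positive iterate of the swap map -/
def Recurrent (x : G) : Prop := ∃ m : ℕ, 0 < m ∧ S.swap^[m] x = x

/-- the set `R(x)` of recurrent conjugates of `x` -/
def Rset (x : G) : Set G := {y : G | IsConj x y ∧ S.Recurrent y}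

/-- the set `C⁺(x)` of positive conjugates of `x` -/
def Cpos (x : G) : Set G := {y : G | IsConj x y ∧ y ∈ S.pos}

/-- the set `C⁻(x)` of negative conjugates of `x` -/
def Cneg (x : G) : Set G := {y : G | IsConj x y ∧ y⁻¹ ∈ S.pos}

/-- the transport of `u` at `y`: with `y = a⁻¹ b` reduced, `u^{(1)} = (a u) ∧ (b u)` -/
def transport (y u : G) : G := S.meet (S.DL y * u) (S.NL y * u)

/-- `Δ_X`: the least upper bound for the prefix order of a set `X` (`1` if there is none) -/
noncomputable def deltaOf (X : Set G) : G :=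
  if h : ∃ d : G, (∀ x ∈ X, S.le x d) ∧ ∀ c : G, (∀ x ∈ X, S.le x c) → S.le d c
  then h.choose else 1

/-- the closure `X̄ = Div(Δ_X) ∩ 𝒜` of a set of atoms -/
noncomputable def closureOf (X : Set G) : Set G := S.Div (S.deltaOf X) ∩ S.atoms

/-- the subgroup `G_X` generated by the closure of `X` -/
noncomputable def GX (X : Set G) : Subgroup G := Subgroup.closure (S.closureOf X)

/-- the support of an element: the closure of the set of atoms appearing in atom
factorizations of its left denominator and left numerator -/
noncomputable def supp (x : G) : Set G :=
  if h : ∃ p : List G × List G,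
      (∀ a ∈ p.1, a ∈ S.atoms) ∧ (∀ a ∈ p.2, a ∈ S.atoms) ∧
      p.1.prod = S.DL x ∧ p.2.prod = S.NL x
  then S.closureOf ({a : G | a ∈ h.choose.1} ∪ {a : G | a ∈ h.choose.2})
  else ∅

/-- an LCM-Garside structure -/
structure IsLCM : Prop where
  delta_eq : S.delta = S.deltaOf S.atoms
  balanced : ∀ X ⊆ S.atoms, ∀ s ∈ S.pos,
    (S.le s (S.deltaOf X) ↔ S.deltaOf X * s⁻¹ ∈ S.pos)
  div_eq : ∀ X ⊆ S.atoms,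
    S.Div (S.deltaOf X) = S.Div S.delta ∩ {g : G | g ∈ S.GX X ∧ g ∈ S.pos}
  factor_closed : ∀ X ⊆ S.atoms, ∀ g : G, g ∈ S.GX X → g ∈ S.pos →
    ∀ a b : G, a ∈ S.pos → b ∈ S.pos → g = a * b → a ∈ S.GX X ∧ b ∈ S.GX X
  lattice_closed : ∀ X ⊆ S.atoms, ∀ a b : G, a ∈ S.GX X → b ∈ S.GX X →
    S.meet a b ∈ S.GX X ∧ S.join a b ∈ S.GX X
  fraction_closed : ∀ X ⊆ S.atoms, ∀ g : G, g ∈ S.GX X →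
    S.DL g ∈ S.GX X ∧ S.NL g ∈ S.GX X

/-- a standard parabolic subgroup: the subgroup generated by a saturated set of atoms -/
noncomputable def IsStandardParabolic (H : Subgroup G) : Prop :=
  ∃ X : Set G, X ⊆ S.atoms ∧ S.closureOf X = X ∧ H = S.GX X

/-- a parabolic subgroup: a conjugate of a standard parabolic subgroup -/
noncomputable def IsParabolic (H : Subgroup G) : Prop :=
  ∃ (P : Subgroup G) (c : G), S.IsStandardParabolic P ∧
    H = Subgroup.map (MulAut.conj c).toMonoidHom P

/-- the structure is support-preserving if conjugations between positive elements
conjugate the corresponding parabolic subgroups of the supports -/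
noncomputable def SupportPreserving : Prop :=
  ∀ y ∈ S.pos, ∀ z ∈ S.pos, ∀ α : G, α⁻¹ * y * α = z →
    Subgroup.map (MulAut.conj α⁻¹).toMonoidHom (S.GX (S.supp y)) = S.GX (S.supp z)

/-- `P` is the parabolic closure of `x` -/
noncomputable def IsParabolicClosure (x : G) (P : Subgroup G) : Prop :=
  S.IsParabolic P ∧ x ∈ P ∧ ∀ H : Subgroup G, S.IsParabolic H → x ∈ H → P ≤ H

end GarsideStructure

namespace GarsideStructure

variable {G : Type*} [Group G] (S : GarsideStructure G)

theorem le_refl (a : G) : S.le a a := by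
  simp [le, S.pos.one_mem]

variable {S} in
theorem le.trans {a b c : G} (hab : S.le a b) (hbc : S.le b c) : S.le a c := by
  simpa [le, mul_assoc] using S.pos.mul_mem hab hbc

variable {S} in
theorem le.antisymm {a b : G} (hab : S.le a b) (hba : S.le b a) : a = b := by
  have h := S.units_triv (a⁻¹ * b) hab (by simpa [le] using hba)
  exact inv_mul_eq_one.mp h

/-- Two elements with the same lower bounds for the prefix order are equal. -/
theorem eq_of_forall_le_iff {a b : G} (h : ∀ c, S.le c a ↔ S.le c b) : a = b :=
  ((h a).1 (S.le_refl a)).antisymm ((h b).2 (S.le_refl b))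

theorem le_meet_iff {a b c : G} : S.le c (S.meet a b) ↔ S.le c a ∧ S.le c b :=
  ⟨fun h => ⟨h.trans (S.meet_le_left a b), h.trans (S.meet_le_right a b)⟩,
    fun h => S.le_meet a b c h.1 h.2⟩

theorem le_mul_left_iff {g a c : G} : S.le c (g * a) ↔ S.le (g⁻¹ * c) a := by
  simp [le, mul_assoc]

theorem mul_meet (g a b : G) : g * S.meet a b = S.meet (g * a) (g * b) :=
  S.eq_of_forall_le_iff fun c => by
    simp only [le_meet_iff, le_mul_left_iff]

theorem one_le_iff {a : G} : S.le 1 a ↔ a ∈ S.pos := by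
  simp [le]

theorem delta_pow_mem_pos (q : ℕ) : S.delta ^ q ∈ S.pos :=
  S.pos.pow_mem S.delta_pos q

theorem conj_delta_pow (q : ℕ) (a : G) :
    a ∈ S.pos ↔ S.delta ^ q * a * (S.delta ^ q)⁻¹ ∈ S.pos := by
  induction q with
  | zero => simp
  | succ q ih =>
    rw [ih, S.conj_delta]
    simp only [pow_succ', mul_inv_rev, mul_assoc]

/-- Right multiplication by a power of `Δ` is an automorphism of the prefix order. -/
theorem le_mul_delta_pow_iff (q : ℕ) {a c : G} :
    S.le c (a * S.delta ^ q) ↔ S.le (c * (S.delta ^ q)⁻¹) a := by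
  unfold le
  rw [S.conj_delta_pow q (c⁻¹ * (a * S.delta ^ q))]
  simp [mul_assoc]

theorem NL_eq (y : G) : S.NL y = S.DL y * y := rfl

theorem le_DL_and_le_NL_iff (y d : G) : S.le d (S.DL y) ∧ S.le d (S.NL y) ↔ S.le d 1 := by
  have h : S.meet (S.DL y * 1) (S.DL y * y) = 1 := by
    rw [← mul_meet, DL, inv_mul_cancel]
  rw [← h, le_meet_iff, mul_one, NL_eq]

theorem transport_delta_pow (y : G) (q : ℕ) :
    S.transport y (S.delta ^ q) = S.delta ^ q :=
  S.eq_of_forall_le_iff fun c => by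
    rw [transport, le_meet_iff, le_mul_delta_pow_iff, le_mul_delta_pow_iff,
      le_DL_and_le_NL_iff, ← le_mul_delta_pow_iff, one_mul]

theorem transport_meet (y u v : G) :
    S.transport y (S.meet u v) = S.meet (S.transport y u) (S.transport y v) :=
  S.eq_of_forall_le_iff fun c => by
    simp only [transport, mul_meet, le_meet_iff]
    tauto

theorem transport_mono (y : G) {u v : G} (h : S.le u v) :
    S.le (S.transport y u) (S.transport y v) := by
  have huv : S.meet u v = u := S.eq_of_forall_le_iff fun c => by
    rw [le_meet_iff]
    exact ⟨fun hc => hc.1, fun hc => ⟨hc, hc.trans h⟩⟩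
  rw [← huv, transport_meet]
  exact S.meet_le_right _ _

theorem transport_eq (y u : G) :
    S.transport y u = S.DL y * u * (S.DL (u⁻¹ * y * u))⁻¹ := by
  rw [transport, DL, DL, inv_inv, mul_meet, NL, DL]
  simp [mul_assoc]

theorem DL_conj (y u : G) :
    S.DL (u⁻¹ * y * u) = (S.transport y u)⁻¹ * S.DL y * u := by
  rw [transport_eq]
  group

theorem swap_conj (y u : G) :
    S.swap (u⁻¹ * y * u) = (S.transport y u)⁻¹ * S.swap y * S.transport y u := by
  rw [swap, DL_conj, swap]
  group

/-- The transport of `u` along the first `n` swaps of `y`. -/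
def iterTransport : ℕ → G → G → G
  | 0, _, u => u
  | n + 1, y, u => iterTransport n (S.swap y) (S.transport y u)

/-- The product of the denominators conjugating `y` to its `n`-th swap. -/
def swapConjugator : ℕ → G → G
  | 0, _ => 1
  | n + 1, y => swapConjugator n (S.swap y) * S.DL y

theorem iterate_swap_conj (n : ℕ) (y u : G) :
    S.swap^[n] (u⁻¹ * y * u) =
      (S.iterTransport n y u)⁻¹ * S.swap^[n] y * S.iterTransport n y u := by
  induction n generalizing y u with
  | zero => rfl
  | succ n ih =>
    rw [Function.iterate_succ_apply, Function.iterate_succ_apply, swap_conj, ih, iterTransport]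

theorem iterTransport_eq (n : ℕ) (y u : G) :
    S.iterTransport n y u =
      S.swapConjugator n y * u * (S.swapConjugator n (u⁻¹ * y * u))⁻¹ := by
  induction n generalizing y u with
  | zero => simp [iterTransport, swapConjugator]
  | succ n ih =>
    rw [iterTransport, ih, swapConjugator, swapConjugator, ← swap_conj, transport_eq]
    group

theorem swapConjugator_add (m n : ℕ) (y : G) :
    S.swapConjugator (m + n) y =
      S.swapConjugator n (S.swap^[m] y) * S.swapConjugator m y := by
  induction m generalizing y with
  | zero => simp [swapConjugator]
  | succ m ih =>
    rw [Nat.succ_add, swapConjugator, ih, swapConjugator, Function.iterate_succ_apply, mul_assoc]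

theorem iterTransport_delta_pow (n : ℕ) (y : G) (q : ℕ) :
    S.iterTransport n y (S.delta ^ q) = S.delta ^ q := by
  induction n generalizing y with
  | zero => rfl
  | succ n ih => rw [iterTransport, transport_delta_pow, ih]

theorem iterTransport_meet (n : ℕ) (y u v : G) :
    S.iterTransport n y (S.meet u v) =
      S.meet (S.iterTransport n y u) (S.iterTransport n y v) := by
  induction n generalizing y u v with
  | zero => rfl
  | succ n ih => rw [iterTransport, transport_meet, ih, iterTransport, iterTransport]

theorem iterTransport_mono (n : ℕ) (y : G) {u v : G} (h : S.le u v) :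
    S.le (S.iterTransport n y u) (S.iterTransport n y v) := by
  induction n generalizing y u v with
  | zero => exact h
  | succ n ih => exact ih _ (S.transport_mono y h)

theorem iterTransport_mem_Div (n : ℕ) (y : G) (q : ℕ) {u : G}
    (hu : u ∈ S.Div (S.delta ^ q)) : S.iterTransport n y u ∈ S.Div (S.delta ^ q) := by
  have h₁ := S.iterTransport_mono n y (S.one_le_iff.2 hu.1)
  have h₂ := S.iterTransport_mono n y hu.2
  have h₃ := S.iterTransport_delta_pow n y 0
  rw [pow_zero] at h₃
  rw [h₃, one_le_iff] at h₁
  rw [iterTransport_delta_pow] at h₂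
  exact ⟨h₁, h₂⟩

theorem meet_delta_mem_Div {u : G} (hu : u ∈ S.pos) : S.meet u S.delta ∈ S.Div S.delta :=
  ⟨S.one_le_iff.1 (S.le_meet_iff.2 ⟨S.one_le_iff.2 hu, S.one_le_iff.2 S.delta_pos⟩),
    S.meet_le_right _ _⟩

/-- Removing its largest simple prefix from a prefix of `Δ ^ (q + 1)` leaves a prefix
of `Δ ^ q`. -/
theorem inv_meet_delta_mul_mem_Div {q : ℕ} {u : G} (hu : u ∈ S.Div (S.delta ^ (q + 1))) :
    (S.meet u S.delta)⁻¹ * u ∈ S.Div (S.delta ^ q) := by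
  refine ⟨S.meet_le_left _ _, ?_⟩
  have h : S.le u (S.meet u S.delta * S.delta ^ q) := by
    rw [le_mul_delta_pow_iff, le_meet_iff, ← le_mul_delta_pow_iff, ← le_mul_delta_pow_iff,
      ← pow_succ']
    exact ⟨by simpa [le] using S.delta_pow_mem_pos q, hu.2⟩
  exact S.le_mul_left_iff.1 h

theorem Div_one : S.Div 1 = {1} := by
  ext s
  refine ⟨fun h => ?_, ?_⟩
  · exact S.units_triv s h.1 (by simpa [le] using h.2)
  · rintro rfl
    exact ⟨S.pos.one_mem, S.le_refl 1⟩

theorem finite_Div_delta_pow (q : ℕ) : (S.Div (S.delta ^ q)).Finite := by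
  induction q with
  | zero => rw [pow_zero, Div_one]; exact Set.finite_singleton 1
  | succ q ih =>
    refine (Set.Finite.mul S.divDelta_finite ih).subset fun u hu => ?_
    exact Set.mem_mul.2 ⟨S.meet u S.delta, S.meet_delta_mem_Div hu.1, _,
      S.inv_meet_delta_mul_mem_Div hu, mul_inv_cancel_left _ _⟩

/-- A positive conjugator between recurrent elements is fixed by an iterated transport. -/
theorem exists_iterTransport_eq {y u : G} {q : ℕ} (hy : S.Recurrent y)
    (hz : S.Recurrent (u⁻¹ * y * u)) (hu : u ∈ S.Div (S.delta ^ q)) :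
    ∃ n : ℕ, 0 < n ∧ S.swap^[n] y = y ∧ S.iterTransport n y u = u := by
  obtain ⟨m₁, hm₁, hy⟩ := hy
  obtain ⟨m₂, hm₂, hz⟩ := hz
  have hyN (k : ℕ) : S.swap^[m₁ * m₂ * k] y = y := by
    rw [mul_assoc, Function.iterate_mul]
    exact Function.iterate_fixed hy _
  have hzN (k : ℕ) : S.swap^[m₁ * m₂ * k] (u⁻¹ * y * u) = u⁻¹ * y * u := by
    rw [mul_comm m₁, mul_assoc, Function.iterate_mul]
    exact Function.iterate_fixed hz _
  obtain ⟨i, j, hij, heq⟩ : ∃ i j : ℕ, i < j ∧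
      S.iterTransport (m₁ * m₂ * i) y u = S.iterTransport (m₁ * m₂ * j) y u := by
    obtain ⟨i, -, j, -, hne, heq⟩ := Set.infinite_univ.exists_ne_map_eq_of_mapsTo
      (f := fun k => S.iterTransport (m₁ * m₂ * k) y u)
      (fun k _ => S.iterTransport_mem_Div _ y q hu) (S.finite_Div_delta_pow q)
    rcases lt_or_gt_of_ne hne with h | h
    · exact ⟨i, j, h, heq⟩
    · exact ⟨j, i, h, heq.symm⟩
  obtain ⟨d, rfl⟩ := Nat.exists_eq_add_of_lt hij
  refine ⟨m₁ * m₂ * (d + 1), by positivity, hyN _, ?_⟩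
  rw [show m₁ * m₂ * (i + d + 1) = m₁ * m₂ * (d + 1) + m₁ * m₂ * i by ring,
    iterTransport_eq, iterTransport_eq, swapConjugator_add, swapConjugator_add, hyN, hzN] at heq
  rw [iterTransport_eq]
  simp only [mul_inv_rev, ← mul_assoc, mul_left_inj] at heq
  simpa [mul_assoc, eq_comm] using heq

theorem recurrent_conj_meet_delta {y u : G} {q : ℕ} (hy : S.Recurrent y)
    (hz : S.Recurrent (u⁻¹ * y * u)) (hu : u ∈ S.Div (S.delta ^ q)) :
    S.Recurrent ((S.meet u S.delta)⁻¹ * y * S.meet u S.delta) := by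
  obtain ⟨n, hn, hyn, hun⟩ := S.exists_iterTransport_eq hy hz hu
  have hΔ := S.iterTransport_delta_pow n y 1
  rw [pow_one] at hΔ
  exact ⟨n, hn, by rw [iterate_swap_conj, iterTransport_meet, hun, hΔ, hyn]⟩

theorem exists_simple_factorization {y u : G} {q : ℕ} (hy : S.Recurrent y)
    (hz : S.Recurrent (u⁻¹ * y * u)) (hu : u ∈ S.Div (S.delta ^ q)) :
    ∃ l : List G, (∀ s ∈ l, s ∈ S.Div S.delta) ∧ l.prod = u ∧
      ∀ k, S.Recurrent ((l.take k).prod⁻¹ * y * (l.take k).prod) := by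
  induction q generalizing y u with
  | zero =>
    rw [pow_zero, Div_one] at hu
    exact ⟨[], by simp, hu.symm, by simpa using hy⟩
  | succ q ih =>
    have hs := S.recurrent_conj_meet_delta hy hz hu
    obtain ⟨l, hl, hprod, hrec⟩ := ih (u := (S.meet u S.delta)⁻¹ * u) hs
      (by convert hz using 1; group) (S.inv_meet_delta_mul_mem_Div hu)
    refine ⟨S.meet u S.delta :: l, ?_, ?_, ?_⟩
    · exact List.forall_mem_cons.2 ⟨S.meet_delta_mem_Div hu.1, hl⟩
    · rw [List.prod_cons, hprod, mul_inv_cancel_left]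
    · rintro (_ | k)
      · simpa using hy
      · simpa [mul_assoc] using hrec k

theorem exists_mem_Div_delta_pow {u : G} (hu : u ∈ S.pos) :
    ∃ q : ℕ, u ∈ S.Div (S.delta ^ q) := by
  obtain ⟨p, q, -, -, hq⟩ := S.delta_bounds u
  refine ⟨q.toNat, hu, le.trans (b := S.delta ^ q) hq ?_⟩
  obtain ⟨k, hk⟩ := Int.le.dest (Int.self_le_toNat q)
  have h : (S.delta ^ q)⁻¹ * S.delta ^ q.toNat = S.delta ^ k := by
    rw [← zpow_natCast S.delta q.toNat, ← hk, zpow_add, inv_mul_cancel_left, zpow_natCast]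
  rw [le, h]
  exact S.delta_pow_mem_pos k

theorem exists_pos_conjugator {y z : G} (h : IsConj y z) :
    ∃ u ∈ S.pos, u⁻¹ * y * u = z := by
  obtain ⟨c, rfl⟩ := isConj_iff.1 h
  obtain ⟨n, hn, hcen⟩ := S.central_power
  obtain ⟨p, -, -, hp, -⟩ := S.delta_bounds c⁻¹
  have hz : S.delta ^ (n * p.natAbs) ∈ Subgroup.center G := by
    rw [pow_mul]
    exact Subgroup.pow_mem _ hcen _
  refine ⟨S.delta ^ (n * p.natAbs) * c⁻¹, ?_, ?_⟩
  · obtain ⟨k, hk⟩ : ∃ k : ℕ, ((n * p.natAbs : ℕ) : ℤ) + p = k := by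
      refine Int.eq_ofNat_of_zero_le ?_
      have : p.natAbs ≤ n * p.natAbs := Nat.le_mul_of_pos_left _ hn
      omega
    have h' : S.delta ^ (n * p.natAbs) * c⁻¹ = S.delta ^ k * ((S.delta ^ p)⁻¹ * c⁻¹) := by
      rw [← zpow_natCast S.delta k, ← hk, zpow_add, zpow_natCast]
      group
    rw [h']
    exact S.pos.mul_mem (S.delta_pow_mem_pos k) hp
  · have hcomm := Subgroup.mem_center_iff.1 hz y
    rw [mul_inv_rev, inv_inv, mul_assoc, mul_assoc, ← mul_assoc y, hcomm]
    group

end GarsideStructure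

/-- any two distinct elements of `R(x)` are connected through `R(x)` by
conjugations by simple elements. -/
theorem garside_connected_by_simple {G : Type*} [Group G]
    (S : GarsideStructure G) (x y z : G)
    (hy : y ∈ S.Rset x) (hz : z ∈ S.Rset x) (hyz : y ≠ z) :
    ∃ (m : ℕ) (u : Fin m → G),
      (∀ i : Fin m, u i ∈ S.Div S.delta) ∧
      (∀ k : ℕ, 1 ≤ k → k ≤ m →
        (((List.ofFn u).take k).prod)⁻¹ * y * ((List.ofFn u).take k).prod ∈ S.Rset x) ∧
      ((List.ofFn u).prod)⁻¹ * y * (List.ofFn u).prod = z := by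
  obtain ⟨u, hu, rfl⟩ := S.exists_pos_conjugator (hy.1.symm.trans hz.1)
  obtain ⟨q, hq⟩ := S.exists_mem_Div_delta_pow hu
  obtain ⟨l, hl, hprod, hrec⟩ := S.exists_simple_factorization hy.2 hz.2 hq
  refine ⟨l.length, l.get, fun i => hl _ (l.get_mem i), fun k _ _ => ?_, ?_⟩
  · rw [List.ofFn_get]
    exact ⟨hy.1.trans (isConj_iff.2 ⟨(l.take k).prod⁻¹, by rw [inv_inv]⟩), hrec k⟩
  · rw [List.ofFn_get, hprod]
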